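/- (Universal embedding theorem / Krasner–Kaloujnine.) Let G be a group, N a normal subgroup of G, and K := G/N the quotient group. Then there exists an injective group homomorphism from G into the regular wreath product N ≀ K. (Concretely, choosing for each u ∈ K a representative t_u ∈ G of u, the map Φ(x) = (f_x, p(x)) with f_x(u) = t_u · x · t_{u·p(x)}⁻¹, where p : G → K is the quotient map, is such an embedding.) -/

import Mathlib

/-!
Choose a set-theoretic section `s` of the quotient map `p` and measure how far left translation
by `x` is from commuting with it: `f_x u = (s u)⁻¹ * x * s ((p x)⁻¹ * u)`. Since `p` kills `f_x u`,
it lies in the kernel. In `f_x u * f_y ((p x)⁻¹ * u)` the two inner values of `s` cancel, leaving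
`f_{xy} u`; this is exactly multiplicativity of `x ↦ (f_x, p x)` in the wreath product. As `x` can
be solved for from `p x` and a single value of `f_x`, this homomorphism is injective.

In terms of the representatives `t_u = (s u⁻¹)⁻¹`, one has `f_x u⁻¹ = t_u * x * t_{u * p x}⁻¹`, so
this is the usual Krasner–Kaloujnine map, reindexed by inversion to fit the left action used here.
-/

/-- The action of `H` on the group of functions `H → G`, given by
`(h • f) k = f (h⁻¹ * k)`. -/
def wreathMulAut (G H : Type*) [Group G] [Group H] : H →* MulAut (H → G) where
  toFun h :=
    { toFun := fun f k => f (h⁻¹ * k)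
      invFun := fun f k => f (h * k)
      left_inv := fun f => by funext k; simp [← mul_assoc]
      right_inv := fun f => by funext k; simp [← mul_assoc]
      map_mul' := fun f g => rfl }
  map_one' := by
    ext f k
    simp
  map_mul' := fun a b => by
    ext f k
    simp [mul_assoc]

/-- The (regular) wreath product `G ≀ H`, i.e. the semidirect product
`(H → G) ⋊ H` where `H` acts on `H → G` by `(h • f) k = f (h⁻¹ * k)`, with
multiplication `(f, h) * (f', h') = (f * (h • f'), h * h')`. -/
abbrev Wreath (G H : Type*) [Group G] [Group H] :=
  (H → G) ⋊[wreathMulAut G H] H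

section KrasnerKaloujnine

variable {G K : Type*} [Group G] [Group K]

/-- The element `f_x u = (s u)⁻¹ * x * s ((p x)⁻¹ * u)` by which a map `s : K → G`, typically a
section of `p : G →* K`, fails to commute with left translation by `x`. It is the function part of
the Krasner–Kaloujnine embedding. -/
def schreierCocycle (p : G →* K) (s : K → G) (x : G) (u : K) : G :=
  (s u)⁻¹ * x * s ((p x)⁻¹ * u)

theorem schreierCocycle_mul (p : G →* K) (s : K → G) (x y : G) (u : K) :
    schreierCocycle p s (x * y) u =
      schreierCocycle p s x u * schreierCocycle p s y ((p x)⁻¹ * u) := by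
  simp only [schreierCocycle, map_mul, mul_inv_rev, mul_assoc, mul_inv_cancel_left]

theorem eq_of_schreierCocycle_eq {p : G →* K} {s : K → G} {x y : G} {u : K}
    (hp : p x = p y) (h : schreierCocycle p s x u = schreierCocycle p s y u) : x = y := by
  rw [schreierCocycle, schreierCocycle, hp] at h
  exact mul_left_cancel (mul_right_cancel h)

variable {p : G →* K} {s : K → G} {N : Subgroup G}

theorem schreierCocycle_mem_ker (hs : Function.RightInverse s p) (x : G) (u : K) :
    schreierCocycle p s x u ∈ p.ker := by
  rw [MonoidHom.mem_ker]
  calc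
    p (schreierCocycle p s x u) = u⁻¹ * p x * ((p x)⁻¹ * u) := by
      simp only [schreierCocycle, map_mul, map_inv, hs _]
    _ = 1 := by group

/-- The Krasner–Kaloujnine homomorphism `x ↦ (f_x, p x)` attached to a section `s` of `p`, where
`f_x` is `schreierCocycle p s x`. The base group may be any subgroup `N` containing `p.ker`, so
that for `p : G →* G ⧸ N` it can be `N` itself, which is only propositionally equal to `p.ker`. -/
def krasnerKaloujnine (hs : Function.RightInverse s p) (hN : p.ker ≤ N) : G →* Wreath N K :=
  MonoidHom.mk'
    (fun x => ⟨fun u => ⟨schreierCocycle p s x u, hN (schreierCocycle_mem_ker hs x u)⟩, p x⟩)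
    fun x y => SemidirectProduct.ext
      (funext fun u => Subtype.ext (schreierCocycle_mul p s x y u)) (map_mul p x y)

theorem krasnerKaloujnine_injective (hs : Function.RightInverse s p) (hN : p.ker ≤ N) :
    Function.Injective (krasnerKaloujnine hs hN) := by
  intro x y h
  have h_right : p x = p y := congrArg SemidirectProduct.right h
  have h_left : schreierCocycle p s x 1 = schreierCocycle p s y 1 :=
    congrArg Subtype.val (congrFun (congrArg SemidirectProduct.left h) 1)
  exact eq_of_schreierCocycle_eq h_right h_left

theorem universal_embedding_theorem_general (hp : Function.Surjective p) (hN : p.ker ≤ N) :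
    ∃ Φ : G →* Wreath N K, Function.Injective Φ :=
  let ⟨_, hs⟩ := hp.hasRightInverse
  ⟨krasnerKaloujnine hs hN, krasnerKaloujnine_injective hs hN⟩

end KrasnerKaloujnine

/-- **Universal embedding theorem (Krasner–Kaloujnine).**
If `N` is a normal subgroup of a group `G` and `K = G/N`, then `G` embeds into
the regular wreath product `N ≀ K`. -/
theorem universal_embedding_theorem
    {G : Type*} [Group G] (N : Subgroup G) [N.Normal] :
    ∃ Φ : G →* Wreath (↥N) (G ⧸ N), Function.Injective Φ :=
  universal_embedding_theorem_general (QuotientGroup.mk'_surjective N) (QuotientGroup.ker_mk' N).le
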